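/- Let u be an f-harmonic function on the Gaussian space, i.e. a smooth function on ℝ^n satisfying Δu - (1/2)⟨x, ∇u⟩ = 0. If u(x) = O(e^{α|x|²/4}) as |x| → ∞ for some 0 < α < 1, then u is constant. -/

import Mathlib

open MeasureTheory

/-- The Euclidean Laplacian `Δu(x) = ∑ᵢ ∂²u/∂xᵢ²`. -/
noncomputable def eLaplacian (n : ℕ) (u : EuclideanSpace ℝ (Fin n) → ℝ)
    (x : EuclideanSpace ℝ (Fin n)) : ℝ :=
  ∑ i : Fin n,
    fderiv ℝ (fun y => fderiv ℝ u y (EuclideanSpace.single i 1)) x (EuclideanSpace.single i 1)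

/-!
Fix a pole `p`. The radial function `w x = g (|x - p|²)` with `g' s = e ^ (β s / 4) / s ^ k` is, for
`0 < β < 1` and `k` large, a strict supersolution of `Δ - ½ ⟨x, ∇·⟩` off `p`, and for `α < β` it
dominates `e ^ (α |x|² / 4)` at infinity. The maximum principle for `u - ε w` outside a ball around
`p`, with `ε → 0` and then the radius tending to `0`, bounds `u` from above by `u p`. As `p` is
arbitrary, `u` is constant.
-/

open Filter Set Topology Asymptotics Laplacian InnerProductSpace

section NormedSpace

variable {E : Type*} [NormedAddCommGroup E] [NormedSpace ℝ E]
  {F : Type*} [NormedAddCommGroup F] [NormedSpace ℝ F]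

lemma deriv_deriv_nonpos_of_isLocalMax {h : ℝ → ℝ} {a : ℝ} (hmax : IsLocalMax h a)
    (hcont : ContinuousAt h a) : deriv (deriv h) a ≤ 0 := by
  by_contra! hpos
  have hmin : IsLocalMin h a := isLocalMin_of_deriv_deriv_pos hpos hmax.deriv_eq_zero hcont
  have hconst : h =ᶠ[𝓝 a] fun _ => h a := by
    filter_upwards [hmax, hmin] with t using le_antisymm
  have hderiv : deriv h =ᶠ[𝓝 a] fun _ => 0 := by simpa using hconst.deriv
  simp [hderiv.deriv_eq] at hpos

lemma hasFDerivAt_fderiv_of_contDiffAt_two {f : E → F} {x : E} (hf : ContDiffAt ℝ 2 f x) :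
    HasFDerivAt (fderiv ℝ f) (fderiv ℝ (fderiv ℝ f) x) x :=
  ((hf.fderiv_right (m := 1) (by norm_num)).differentiableAt one_ne_zero).hasFDerivAt

lemma hasFDerivAt_fderiv_apply {f : E → F} {x : E} (hf : ContDiffAt ℝ 2 f x) (v : E) :
    HasFDerivAt (fun y => fderiv ℝ f y v) ((fderiv ℝ (fderiv ℝ f) x).flip v) x := by
  simpa using (hasFDerivAt_fderiv_of_contDiffAt_two hf).clm_apply (hasFDerivAt_const v x)

lemma deriv_deriv_comp_add_smul {f : E → F} {x : E} (hf : ContDiffAt ℝ 2 f x) (v : E) :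
    deriv (deriv fun t : ℝ => f (x + t • v)) 0 = fderiv ℝ (fderiv ℝ f) x v v := by
  have hline (t : ℝ) : HasDerivAt (fun t : ℝ => x + t • v) v t := by
    simpa using ((hasDerivAt_id t).smul_const v).const_add x
  have hline₀ : Tendsto (fun t : ℝ => x + t • v) (𝓝 0) (𝓝 x) := by
    simpa using (hline 0).continuousAt.tendsto
  have hfirst : deriv (fun t : ℝ => f (x + t • v)) =ᶠ[𝓝 0] fun t => fderiv ℝ f (x + t • v) v := by
    filter_upwards [hline₀.eventually (hf.eventually (by simp))] with t ht
    exact ((ht.differentiableAt two_ne_zero).hasFDerivAt.comp_hasDerivAt t (hline t)).deriv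
  rw [hfirst.deriv_eq]
  exact ((hasFDerivAt_fderiv_apply hf v).hasLineDerivAt v).lineDeriv

lemma fderiv_fderiv_nonpos_of_isLocalMax {f : E → ℝ} {x : E} (hf : ContDiffAt ℝ 2 f x)
    (hmax : IsLocalMax f x) (v : E) : fderiv ℝ (fderiv ℝ f) x v v ≤ 0 := by
  have hline : ContinuousAt (fun t : ℝ => x + t • v) 0 := by fun_prop
  have hx : x + (0 : ℝ) • v = x := by simp
  rw [← deriv_deriv_comp_add_smul hf]
  refine deriv_deriv_nonpos_of_isLocalMax ?_ ?_
  · exact IsLocalMax.comp_continuous (g := fun t : ℝ => x + t • v) (by rwa [hx]) hline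
  · exact ContinuousAt.comp (f := fun t : ℝ => x + t • v) (by rw [hx]; exact hf.continuousAt) hline

lemma fderiv_fderiv_comp_apply {g : ℝ → ℝ} {q : E → ℝ} {x : E} (hg : ContDiffAt ℝ 2 g (q x))
    (hq : ContDiffAt ℝ 2 q x) (v : E) :
    fderiv ℝ (fderiv ℝ fun y => g (q y)) x v v =
      deriv (deriv g) (q x) * fderiv ℝ q x v ^ 2
        + deriv g (q x) * fderiv ℝ (fderiv ℝ q) x v v := by
  have hfirst : (fderiv ℝ fun y => g (q y)) =ᶠ[𝓝 x] fun y => deriv g (q y) • fderiv ℝ q y := by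
    filter_upwards [hq.continuousAt.eventually (hg.eventually (by simp)), hq.eventually (by simp)]
      with y hgy hqy
    exact ((hgy.differentiableAt (by simp)).hasDerivAt.comp_hasFDerivAt y
      (hqy.differentiableAt (by simp)).hasFDerivAt).fderiv
  have hg' : HasDerivAt (deriv g) (deriv (deriv g) (q x)) (q x) :=
    ((hg.derivWithin (m := 1) (by norm_num)).differentiableAt one_ne_zero).hasDerivAt
  have hq' : HasFDerivAt q (fderiv ℝ q x) x := (hq.differentiableAt two_ne_zero).hasFDerivAt
  have hprod := (hg'.comp_hasFDerivAt x hq').fun_smul (hasFDerivAt_fderiv_of_contDiffAt_two hq)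
  simp only [Function.comp_apply] at hprod
  rw [hfirst.fderiv_eq, hprod.fderiv]
  simp only [_root_.add_apply, smul_apply, ContinuousLinearMap.smulRight_apply, smul_eq_mul]
  ring

end NormedSpace

lemma tendsto_norm_sub_sq_cocompact_atTop {X : Type*} [NormedAddCommGroup X] [ProperSpace X]
    (p : X) :
    Tendsto (fun x => ‖x - p‖ ^ 2) (cocompact X) atTop := by
  simpa only [Function.comp_def, dist_eq_norm] using
    (tendsto_pow_atTop two_ne_zero).comp (tendsto_dist_right_cocompact_atTop p)

section InnerProductSpace

variable {E : Type*} [NormedAddCommGroup E] [InnerProductSpace ℝ E]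

lemma fderiv_norm_sub_sq (p x : E) :
    fderiv ℝ (fun y => ‖y - p‖ ^ 2) x = 2 • innerSL ℝ (x - p) := by
  simpa using ((hasFDerivAt_id x).sub_const p).norm_sq.fderiv

lemma isBigO_exp_norm_sq_exp_norm_sub_sq {α γ : ℝ} (hαγ : α < γ) (p : E) (l : Filter E) :
    (fun x => Real.exp (α * ‖x‖ ^ 2 / 4)) =O[l] fun x => Real.exp (γ * ‖x - p‖ ^ 2 / 4) := by
  have hγα : γ - α ≠ 0 := (sub_pos.mpr hαγ).ne'
  set K := γ ^ 2 * ‖p‖ ^ 2 / (γ - α) - γ * ‖p‖ ^ 2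
  have hsquare (x : E) : γ * ‖x - p‖ ^ 2 + K - α * ‖x‖ ^ 2 =
      (γ - α) * ‖x - (γ / (γ - α)) • p‖ ^ 2 := by
    rw [norm_sub_sq_real, norm_sub_sq_real, inner_smul_right, norm_smul, mul_pow, Real.norm_eq_abs,
      sq_abs]
    simp only [K]
    field_simp
    ring
  refine IsBigO.of_bound (Real.exp (K / 4)) (Eventually.of_forall fun x => ?_)
  have hnonneg : 0 ≤ (γ - α) * ‖x - (γ / (γ - α)) • p‖ ^ 2 :=
    mul_nonneg (sub_pos.mpr hαγ).le (sq_nonneg _)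
  rw [Real.norm_of_nonneg (Real.exp_nonneg _), Real.norm_of_nonneg (Real.exp_nonneg _),
    ← Real.exp_add]
  gcongr
  linarith [hsquare x]

lemma exists_two_mul_inner_sub_neg_half_smul_le {σ : ℝ} (hσ : σ < 1) (p : E) :
    ∃ D, ∀ x, 2 * ⟪x - p, -(1 / 2 : ℝ) • x⟫_ℝ ≤ D - σ * ‖x - p‖ ^ 2 := by
  have hσ' : 1 - σ ≠ 0 := (sub_pos.mpr hσ).ne'
  refine ⟨‖p‖ ^ 2 / (4 * (1 - σ)), fun x => ?_⟩
  obtain ⟨y, rfl⟩ : ∃ y, x = y + p := ⟨x - p, by simp⟩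
  have hsquare : ‖p‖ ^ 2 / (4 * (1 - σ)) - σ * ‖y‖ ^ 2 - 2 * ⟪y, -(1 / 2 : ℝ) • (y + p)⟫_ℝ =
      (1 - σ) * ‖y + (1 / (2 * (1 - σ))) • p‖ ^ 2 := by
    rw [norm_add_sq_real, inner_smul_right, inner_smul_right, inner_add_right,
      real_inner_self_eq_norm_sq, norm_smul, mul_pow, Real.norm_eq_abs, sq_abs]
    field_simp
    ring
  have hnonneg : 0 ≤ (1 - σ) * ‖y + (1 / (2 * (1 - σ))) • p‖ ^ 2 :=
    mul_nonneg (sub_pos.mpr hσ).le (sq_nonneg _)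
  rw [add_sub_cancel_right]
  linarith

end InnerProductSpace

section BarrierProfile

/-- The radial profile, as a function of the squared distance to the pole, of the barriers used in
the comparison argument. The fundamental solution of `Δ - ½ ⟨x, ∇·⟩` on `ℝᴺ` with pole `0` has a
profile with derivative `e ^ (s / 4) / s ^ (N / 2)`; here the exponential rate is lowered and the
power raised. The integral starts at `1` since the integrand is singular at `0`; only values at
`s > 0` are meaningful. -/
noncomputable def barrierProfile (β : ℝ) (k : ℕ) (s : ℝ) : ℝ :=
  ∫ t in (1 : ℝ)..s, Real.exp (β * t / 4) / t ^ k

lemma continuousOn_exp_div_pow (β : ℝ) (k : ℕ) :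
    ContinuousOn (fun t => Real.exp (β * t / 4) / t ^ k) (Ioi 0) :=
  ContinuousOn.div (by fun_prop) (by fun_prop) fun t ht => pow_ne_zero k (ne_of_gt ht)

lemma hasDerivAt_barrierProfile (β : ℝ) (k : ℕ) {s : ℝ} (hs : 0 < s) :
    HasDerivAt (barrierProfile β k) (Real.exp (β * s / 4) / s ^ k) s := by
  have hcont := continuousOn_exp_div_pow β k
  refine intervalIntegral.integral_hasDerivAt_right ?_
    (hcont.stronglyMeasurableAtFilter isOpen_Ioi s hs) (hcont.continuousAt (Ioi_mem_nhds hs))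
  exact (hcont.mono (ordConnected_Ioi.uIcc_subset one_pos hs)).intervalIntegrable

lemma deriv_barrierProfile (β : ℝ) (k : ℕ) {s : ℝ} (hs : 0 < s) :
    deriv (barrierProfile β k) s = Real.exp (β * s / 4) / s ^ k :=
  (hasDerivAt_barrierProfile β k hs).deriv

lemma deriv_deriv_barrierProfile (β : ℝ) (k : ℕ) {s : ℝ} (hs : 0 < s) :
    deriv (deriv (barrierProfile β k)) s =
      (β / 4 - k / s) * (Real.exp (β * s / 4) / s ^ k) := by
  have hfirst : deriv (barrierProfile β k) =ᶠ[𝓝 s] fun t => Real.exp (β * t / 4) / t ^ k := by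
    filter_upwards [Ioi_mem_nhds hs] with t ht using deriv_barrierProfile β k ht
  have hexp : HasDerivAt (fun t => Real.exp (β * t / 4)) (Real.exp (β * s / 4) * (β / 4)) s := by
    simpa using (((hasDerivAt_id s).const_mul β).div_const 4).exp
  rw [hfirst.deriv_eq, (hexp.fun_div (hasDerivAt_pow k s) (pow_pos hs k).ne').deriv]
  rcases k with _ | k
  · simp only [pow_zero, Nat.cast_zero]
    ring
  · rw [Nat.add_sub_cancel]
    field_simp
    ring

lemma contDiffAt_barrierProfile (β : ℝ) (k : ℕ) {s : ℝ} (hs : 0 < s) :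
    ContDiffAt ℝ 2 (barrierProfile β k) s := by
  suffices ContDiffOn ℝ (1 + 1) (barrierProfile β k) (Ioi 0) from
    this.contDiffAt (Ioi_mem_nhds hs)
  refine (contDiffOn_succ_iff_deriv_of_isOpen isOpen_Ioi).mpr ⟨?_, by simp, ?_⟩
  · exact fun t ht => (hasDerivAt_barrierProfile β k ht).differentiableAt.differentiableWithinAt
  · refine ContDiffOn.congr ?_ fun t ht => deriv_barrierProfile β k ht
    exact ContDiffOn.div (by fun_prop) (by fun_prop) fun t ht => pow_ne_zero k (ne_of_gt ht)

lemma exp_div_pow_le_barrierProfile {β : ℝ} (hβ : 0 ≤ β) (k : ℕ) {s : ℝ} (hs : 2 ≤ s) :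
    Real.exp (β * (s - 1) / 4) / s ^ k ≤ barrierProfile β k s := by
  have hcont := continuousOn_exp_div_pow β k
  have hint {c d : ℝ} (hc : 1 ≤ c) (hd : 1 ≤ d) :
      IntervalIntegrable (fun t => Real.exp (β * t / 4) / t ^ k) volume c d :=
    (hcont.mono (ordConnected_Ioi.uIcc_subset (one_pos.trans_le hc)
      (one_pos.trans_le hd))).intervalIntegrable
  have hhead : 0 ≤ ∫ t in (1 : ℝ)..(s - 1), Real.exp (β * t / 4) / t ^ k := by
    refine intervalIntegral.integral_nonneg (by linarith) fun t ht => ?_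
    have : 0 < t := one_pos.trans_le ht.1
    positivity
  have htail : Real.exp (β * (s - 1) / 4) / s ^ k ≤
      ∫ t in (s - 1)..s, Real.exp (β * t / 4) / t ^ k := by
    have hmono : ∀ t ∈ Icc (s - 1) s,
        Real.exp (β * (s - 1) / 4) / s ^ k ≤ Real.exp (β * t / 4) / t ^ k := by
      intro t ht
      have : 0 < t := by linarith [ht.1]
      gcongr
      exacts [ht.1, ht.2]
    simpa using intervalIntegral.integral_mono_on (by linarith) intervalIntegrable_const
      (hint (by linarith) (by linarith)) hmono
  rw [barrierProfile, ← intervalIntegral.integral_add_adjacent_intervals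
    (hint le_rfl (by linarith : 1 ≤ s - 1)) (hint (by linarith) (by linarith))]
  linarith

lemma isLittleO_exp_barrierProfile {γ β : ℝ} (hβ : 0 ≤ β) (hγβ : γ < β) (k : ℕ) :
    (fun s => Real.exp (γ * s / 4)) =o[atTop] barrierProfile β k := by
  have hpow : (fun s : ℝ => s ^ k) =o[atTop] fun s => Real.exp ((β - γ) / 4 * s) :=
    isLittleO_pow_exp_pos_mul_atTop k (by linarith)
  have hlhs : (fun s : ℝ => s ^ k * (Real.exp (γ * s / 4) / s ^ k)) =ᶠ[atTop]
      fun s => Real.exp (γ * s / 4) := by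
    filter_upwards [eventually_gt_atTop 0] with s hs
    field_simp
  have hrhs : (fun s : ℝ => Real.exp ((β - γ) / 4 * s) * (Real.exp (γ * s / 4) / s ^ k)) =
      fun s => Real.exp (β / 4) * (Real.exp (β * (s - 1) / 4) / s ^ k) := by
    funext s
    rw [mul_div_assoc', mul_div_assoc', ← Real.exp_add, ← Real.exp_add]
    ring_nf
  have hquot : (fun s => Real.exp (γ * s / 4)) =o[atTop]
      fun s => Real.exp (β * (s - 1) / 4) / s ^ k :=
    ((hpow.mul_isBigO (isBigO_refl _ _)).congr' hlhs (.of_eq hrhs)).trans_isBigO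
      (isBigO_const_mul_self _ _ _)
  refine hquot.trans_isBigO (IsBigO.of_bound 1 ?_)
  filter_upwards [eventually_ge_atTop 2] with s hs
  have hle := exp_div_pow_le_barrierProfile hβ k hs
  rw [one_mul, Real.norm_of_nonneg (by positivity)]
  exact hle.trans (le_abs_self _)

lemma tendsto_barrierProfile_atTop {β : ℝ} (hβ : 0 < β) (k : ℕ) :
    Tendsto (barrierProfile β k) atTop atTop := by
  have hone : (fun _ : ℝ => (1 : ℝ)) =o[atTop] barrierProfile β k := by
    simpa using isLittleO_exp_barrierProfile hβ.le hβ k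
  refine ((isLittleO_one_left_iff ℝ).mp hone).congr' ?_
  filter_upwards [eventually_ge_atTop 2] with s hs
  exact Real.norm_of_nonneg (le_trans (by positivity) (exp_div_pow_le_barrierProfile hβ.le k hs))

end BarrierProfile

section FiniteDimensional

variable {E : Type*} [NormedAddCommGroup E] [InnerProductSpace ℝ E] [FiniteDimensional ℝ E]

lemma laplacian_eq_sum_fderiv_fderiv {F : Type*} [NormedAddCommGroup F] [NormedSpace ℝ F]
    {ι : Type*} [Fintype ι] (b : OrthonormalBasis ι ℝ E) (f : E → F) (x : E) :
    Δ f x = ∑ i, fderiv ℝ (fderiv ℝ f) x (b i) (b i) := by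
  simp [laplacian_eq_iteratedFDeriv_orthonormalBasis f b, iteratedFDeriv_two_apply]

lemma laplacian_nonpos_of_isLocalMax {f : E → ℝ} {x : E} (hf : ContDiffAt ℝ 2 f x)
    (hmax : IsLocalMax f x) : Δ f x ≤ 0 := by
  rw [laplacian_eq_sum_fderiv_fderiv (stdOrthonormalBasis ℝ E)]
  exact Finset.sum_nonpos fun i _ => fderiv_fderiv_nonpos_of_isLocalMax hf hmax _

lemma laplacian_comp {g : ℝ → ℝ} {q : E → ℝ} {x : E} (hg : ContDiffAt ℝ 2 g (q x))
    (hq : ContDiffAt ℝ 2 q x) :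
    Δ (fun y => g (q y)) x =
      deriv (deriv g) (q x) * ‖gradient q x‖ ^ 2 + deriv g (q x) * Δ q x := by
  set b := stdOrthonormalBasis ℝ E
  have hgrad : ∑ i, fderiv ℝ q x (b i) ^ 2 = ‖gradient q x‖ ^ 2 := by
    rw [← b.sum_sq_inner_left]
    simp [gradient]
  simp only [laplacian_eq_sum_fderiv_fderiv b, fderiv_fderiv_comp_apply hg hq,
    Finset.sum_add_distrib, ← Finset.mul_sum, hgrad]

lemma gradient_norm_sub_sq (p x : E) :
    gradient (fun y => ‖y - p‖ ^ 2) x = (2 : ℝ) • (x - p) := by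
  refine ext_inner_right ℝ fun v => ?_
  rw [inner_gradient_left, fderiv_norm_sub_sq]
  simp only [two_smul, add_apply, innerSL_apply_apply, inner_add_left]

lemma laplacian_norm_sub_sq (p x : E) :
    Δ (fun y => ‖y - p‖ ^ 2) x = 2 * Module.finrank ℝ E := by
  set b := stdOrthonormalBasis ℝ E
  have hunit (i) : innerSL ℝ (b i) (b i) = 1 := by
    rw [innerSL_apply_apply, real_inner_self_eq_norm_sq, b.norm_eq_one, one_pow]
  have hfirst : (fderiv ℝ fun y => ‖y - p‖ ^ 2) = fun y => 2 • innerSL ℝ (y - p) :=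
    funext (fderiv_norm_sub_sq p)
  have hsecond : HasFDerivAt (fun y => 2 • innerSL ℝ (y - p)) (2 • innerSL ℝ) x :=
    ((innerSL ℝ).hasFDerivAt.comp x (hasFDerivAt_sub_const p)).const_smul 2
  rw [laplacian_eq_sum_fderiv_fderiv b, hfirst, hsecond.fderiv]
  simp [hunit, mul_comm]

/-- The generator `Δ + b · ∇` of Brownian motion (at double speed) with drift `b`. For
`b = -∇f` it is the weighted Laplacian `Δ_f`. -/
noncomputable def driftLaplacian (b : E → E) (v : E → ℝ) (x : E) : ℝ :=
  Δ v x + fderiv ℝ v x (b x)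

variable {b : E → E}

lemma driftLaplacian_nonpos_of_isLocalMax {v : E → ℝ} {x : E} (hv : ContDiffAt ℝ 2 v x)
    (hmax : IsLocalMax v x) : driftLaplacian b v x ≤ 0 := by
  simpa [driftLaplacian, hmax.fderiv_eq_zero] using laplacian_nonpos_of_isLocalMax hv hmax

lemma driftLaplacian_sub_const_mul {u w : E → ℝ} {x : E} (hu : ContDiffAt ℝ 2 u x)
    (hw : ContDiffAt ℝ 2 w x) (ε : ℝ) :
    driftLaplacian b (fun y => u y - ε * w y) x =
      driftLaplacian b u x - ε * driftLaplacian b w x := by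
  have hlap : Δ (fun y => u y - ε * w y) x = Δ u x - ε * Δ w x := by
    rw [← smul_eq_mul ε (Δ w x), ← laplacian_smul ε hw]
    exact hu.laplacian_sub (hw.const_smul ε)
  have hfderiv : fderiv ℝ (fun y => u y - ε * w y) x = fderiv ℝ u x - ε • fderiv ℝ w x :=
    ((hu.differentiableAt two_ne_zero).hasFDerivAt.sub
      ((hw.differentiableAt two_ne_zero).hasFDerivAt.const_mul ε)).fderiv
  simp only [driftLaplacian, hlap, hfderiv, sub_apply, smul_apply, smul_eq_mul]
  ring

lemma driftLaplacian_comp {g : ℝ → ℝ} {q : E → ℝ} {x : E} (hg : ContDiffAt ℝ 2 g (q x))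
    (hq : ContDiffAt ℝ 2 q x) :
    driftLaplacian b (fun y => g (q y)) x =
      deriv (deriv g) (q x) * ‖gradient q x‖ ^ 2 + deriv g (q x) * driftLaplacian b q x := by
  have hfderiv : fderiv ℝ (fun y => g (q y)) x = deriv g (q x) • fderiv ℝ q x :=
    ((hg.differentiableAt two_ne_zero).hasDerivAt.comp_hasFDerivAt x
      (hq.differentiableAt two_ne_zero).hasFDerivAt).fderiv
  simp only [driftLaplacian, laplacian_comp hg hq, hfderiv, smul_apply, smul_eq_mul]
  ring

lemma driftLaplacian_comp_norm_sub_sq {g : ℝ → ℝ} {p x : E}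
    (hg : ContDiffAt ℝ 2 g (‖x - p‖ ^ 2)) :
    driftLaplacian b (fun y => g (‖y - p‖ ^ 2)) x =
      4 * ‖x - p‖ ^ 2 * deriv (deriv g) (‖x - p‖ ^ 2)
        + (2 * Module.finrank ℝ E + 2 * ⟪x - p, b x⟫_ℝ) * deriv g (‖x - p‖ ^ 2) := by
  have hdist : ContDiffAt ℝ 2 (fun y => ‖y - p‖ ^ 2) x :=
    (contDiffAt_id.sub contDiffAt_const).norm_sq ℝ
  rw [driftLaplacian_comp (q := fun y => ‖y - p‖ ^ 2) hg hdist, gradient_norm_sub_sq, norm_smul,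
    mul_pow, driftLaplacian, laplacian_norm_sub_sq, fderiv_norm_sub_sq]
  simp only [two_smul, add_apply, innerSL_apply_apply]
  rw [Real.norm_ofNat]
  ring

lemma exists_mem_frontier_le_of_driftLaplacian_pos {S : Set E} {v : E → ℝ} (hS : IsClosed S)
    (hcont : ContinuousOn v S) (hdiff : ∀ y ∈ interior S, ContDiffAt ℝ 2 v y)
    (hpos : ∀ y ∈ interior S, 0 < driftLaplacian b v y)
    (hlim : Tendsto v (cocompact E ⊓ 𝓟 S) atBot) {x : E} (hx : x ∈ S) :
    ∃ y ∈ frontier S, v x ≤ v y := by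
  obtain ⟨y, hyS, hymax⟩ := hcont.exists_isMaxOn' hS hx (hlim.eventually_le_atBot (v x))
  refine ⟨y, ?_, hymax hx⟩
  rw [hS.frontier_eq]
  refine ⟨hyS, fun hy => (hpos y hy).not_ge ?_⟩
  exact driftLaplacian_nonpos_of_isLocalMax (hdiff y hy)
    (hymax.isLocalMax (mem_interior_iff_mem_nhds.mp hy))

/-- A barrier with pole `p` for `driftLaplacian b`: a strict supersolution off `p` that tends to
`+∞` at infinity. Nothing is required at `p`, where `w` may blow up to `-∞`. -/
structure IsBarrier (b : E → E) (p : E) (w : E → ℝ) : Prop where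
  contDiffAt {x : E} (hx : x ≠ p) : ContDiffAt ℝ 2 w x
  driftLaplacian_neg {x : E} (hx : x ≠ p) : driftLaplacian b w x < 0
  tendsto_atTop : Tendsto w (cocompact E) atTop

namespace IsBarrier

variable {p : E} {u w : E → ℝ}

lemma exists_mem_sphere_sub_le (hw : IsBarrier b p w) (hu : ContDiff ℝ 2 u)
    (hsub : ∀ y, 0 ≤ driftLaplacian b u y)
    (hgrowth : ∀ ε > 0, ∀ᶠ y in cocompact E, u y ≤ ε * w y) {r ε : ℝ} (hr : 0 < r) (hε : 0 < ε)
    {x : E} (hx : r ≤ dist x p) :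
    ∃ y ∈ Metric.sphere p r, u x - ε * w x ≤ u y - ε * w y := by
  have hne {y} (hy : y ∈ (Metric.ball p r)ᶜ) : y ≠ p := by
    rintro rfl
    exact hy (Metric.mem_ball_self hr)
  have hdiff {y} (hy : y ≠ p) : ContDiffAt ℝ 2 (fun z => u z - ε * w z) y :=
    hu.contDiffAt.sub (contDiffAt_const.mul (hw.contDiffAt hy))
  have hpos {y} (hy : y ≠ p) : 0 < driftLaplacian b (fun z => u z - ε * w z) y := by
    rw [driftLaplacian_sub_const_mul hu.contDiffAt (hw.contDiffAt hy)]
    linarith [hsub y, mul_neg_of_pos_of_neg hε (hw.driftLaplacian_neg hy)]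
  have hlim : Tendsto (fun y => u y - ε * w y) (cocompact E) atBot := by
    refine tendsto_atBot_mono' _ ?_
      (tendsto_neg_atTop_atBot.comp (hw.tendsto_atTop.const_mul_atTop (half_pos hε)))
    filter_upwards [hgrowth (ε / 2) (half_pos hε)] with y hy
    simp only [Function.comp_apply]
    linarith
  obtain ⟨y, hy, hle⟩ := exists_mem_frontier_le_of_driftLaplacian_pos (S := (Metric.ball p r)ᶜ)
    Metric.isOpen_ball.isClosed_compl
    (fun y hy => (hdiff (hne hy)).continuousAt.continuousWithinAt)
    (fun y hy => hdiff (hne (interior_subset hy))) (fun y hy => hpos (hne (interior_subset hy)))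
    (hlim.mono_left inf_le_left) (x := x) (by simpa using hx)
  rw [frontier_compl] at hy
  exact ⟨y, Metric.frontier_ball_subset_sphere hy, hle⟩

lemma apply_le_apply_pole (hw : IsBarrier b p w) (hu : ContDiff ℝ 2 u)
    (hsub : ∀ y, 0 ≤ driftLaplacian b u y)
    (hgrowth : ∀ ε > 0, ∀ᶠ y in cocompact E, u y ≤ ε * w y) (x : E) : u x ≤ u p := by
  rcases eq_or_ne x p with rfl | hxp
  · exact le_rfl
  refine le_of_forall_pos_le_add fun η hη => ?_
  obtain ⟨δ, hδ, hclose⟩ := Metric.continuous_iff.mp hu.continuous p η hη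
  set r := min (δ / 2) (dist x p)
  have hr : 0 < r := lt_min (half_pos hδ) (dist_pos.mpr hxp)
  have hu_sphere : ∀ y ∈ Metric.sphere p r, u y ≤ u p + η := by
    intro y hy
    have hyδ : dist y p < δ := by
      rw [Metric.mem_sphere.mp hy]
      exact (min_le_left _ _).trans_lt (half_lt_self hδ)
    linarith [(abs_lt.mp (hclose y hyδ)).2]
  have hw_cont : ContinuousOn w (Metric.sphere p r) := fun y hy =>
    (hw.contDiffAt (Metric.ne_of_mem_sphere hy hr.ne')).continuousAt.continuousWithinAt
  obtain ⟨m, hm⟩ := (isCompact_sphere p r).bddBelow_image hw_cont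
  have hle : ∀ ε > 0, u x - ε * w x ≤ u p + η - ε * m := by
    intro ε hε
    obtain ⟨y, hy, hxy⟩ := hw.exists_mem_sphere_sub_le hu hsub hgrowth hr hε (min_le_right _ _)
    have hmy : m ≤ w y := hm (mem_image_of_mem w hy)
    linarith [hu_sphere y hy, mul_le_mul_of_nonneg_left hmy hε.le]
  have hlim (a c : ℝ) : Tendsto (fun ε : ℝ => a - ε * c) (𝓝[>] 0) (𝓝 a) :=
    Tendsto.mono_left (Continuous.tendsto' (by fun_prop) _ _ (by simp)) nhdsWithin_le_nhds
  exact le_of_tendsto_of_tendsto (hlim _ _) (hlim _ _) (eventually_mem_nhdsWithin.mono hle)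

end IsBarrier

lemma isLittleO_exp_norm_sq_barrierProfile {α β : ℝ} (hβ : 0 ≤ β) (hαβ : α < β) (k : ℕ) (p : E) :
    (fun x => Real.exp (α * ‖x‖ ^ 2 / 4)) =o[cocompact E]
      fun x => barrierProfile β k (‖x - p‖ ^ 2) := by
  obtain ⟨γ, hαγ, hγβ⟩ := exists_between hαβ
  exact (isBigO_exp_norm_sq_exp_norm_sub_sq hαγ p _).trans_isLittleO
    ((isLittleO_exp_barrierProfile hβ hγβ k).comp_tendsto (tendsto_norm_sub_sq_cocompact_atTop p))

lemma isBarrier_barrierProfile {p : E} {β σ D : ℝ} {k : ℕ} (hβ : 0 < β) (hβσ : β < σ)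
    (hb : ∀ x, 2 * ⟪x - p, b x⟫_ℝ ≤ D - σ * ‖x - p‖ ^ 2)
    (hk : 2 * Module.finrank ℝ E + D ≤ 4 * k) :
    IsBarrier b p fun x => barrierProfile β k (‖x - p‖ ^ 2) where
  contDiffAt {x} hx :=
    have hs : 0 < ‖x - p‖ ^ 2 := pow_pos (norm_sub_pos_iff.mpr hx) 2
    (contDiffAt_barrierProfile β k hs).comp x ((contDiffAt_id.sub contDiffAt_const).norm_sq ℝ)
  driftLaplacian_neg {x} hx := by
    have hs : 0 < ‖x - p‖ ^ 2 := pow_pos (norm_sub_pos_iff.mpr hx) 2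
    rw [driftLaplacian_comp_norm_sub_sq (contDiffAt_barrierProfile β k hs),
      deriv_deriv_barrierProfile β k hs, deriv_barrierProfile β k hs]
    have hbx := hb x
    set s := ‖x - p‖ ^ 2
    have hslope : 0 < Real.exp (β * s / 4) / s ^ k := by positivity
    have hcoeff : β * s - 4 * k + (2 * Module.finrank ℝ E + 2 * ⟪x - p, b x⟫_ℝ) < 0 := by
      linarith [mul_lt_mul_of_pos_right hβσ hs]
    calc
      _ = (β * s - 4 * k + (2 * Module.finrank ℝ E + 2 * ⟪x - p, b x⟫_ℝ)) *
          (Real.exp (β * s / 4) / s ^ k) := by field_simp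
      _ < 0 := mul_neg_of_neg_of_pos hcoeff hslope
  tendsto_atTop := (tendsto_barrierProfile_atTop hβ k).comp (tendsto_norm_sub_sq_cocompact_atTop p)

theorem exists_eq_const_of_driftLaplacian_nonneg {u : E → ℝ} {α σ C : ℝ} (hσ : 0 < σ) (hασ : α < σ)
    (hb : ∀ p, ∃ D, ∀ x, 2 * ⟪x - p, b x⟫_ℝ ≤ D - σ * ‖x - p‖ ^ 2) (hu : ContDiff ℝ 2 u)
    (hsub : ∀ x, 0 ≤ driftLaplacian b u x)
    (hgrowth : ∀ᶠ x in cocompact E, u x ≤ C * Real.exp (α * ‖x‖ ^ 2 / 4)) :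
    ∃ c : ℝ, u = fun _ => c := by
  suffices hle : ∀ p x, u x ≤ u p from ⟨u 0, funext fun x => (hle 0 x).antisymm (hle x 0)⟩
  intro p
  obtain ⟨β, hβ, hβσ⟩ := exists_between (max_lt hσ hασ)
  obtain ⟨hβ₀, hαβ⟩ := max_lt_iff.mp hβ
  obtain ⟨D, hD⟩ := hb p
  obtain ⟨k, hk⟩ := exists_nat_ge ((2 * Module.finrank ℝ E + D) / 4)
  have hw := isBarrier_barrierProfile (k := k) hβ₀ hβσ hD (by linarith)
  refine hw.apply_le_apply_pole hu hsub fun ε hε => ?_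
  have hlittle := (isLittleO_exp_norm_sq_barrierProfile hβ₀.le hαβ k p).const_mul_left C
  filter_upwards [hgrowth, hlittle.bound hε, hw.tendsto_atTop.eventually_ge_atTop 0]
    with x hux hbound hnonneg
  rw [Real.norm_of_nonneg hnonneg] at hbound
  exact hux.trans ((le_abs_self _).trans hbound)

theorem stmt_8_general {u : E → ℝ} (hu : ContDiff ℝ 2 u)
    (hsub : ∀ x, 0 ≤ Δ u x - (1 / 2) * fderiv ℝ u x x) {α C : ℝ} (hα : α < 1)
    (hgrowth : ∀ᶠ x in cocompact E, u x ≤ C * Real.exp (α * ‖x‖ ^ 2 / 4)) :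
    ∃ c : ℝ, u = fun _ => c := by
  obtain ⟨σ, hσ, hσ₁⟩ := exists_between (max_lt one_pos hα)
  obtain ⟨hσ₀, hασ⟩ := max_lt_iff.mp hσ
  refine exists_eq_const_of_driftLaplacian_nonneg (b := fun x => -(1 / 2 : ℝ) • x) hσ₀ hασ
    (exists_two_mul_inner_sub_neg_half_smul_le hσ₁) hu (fun x => ?_) hgrowth
  rw [driftLaplacian, map_smul, smul_eq_mul, neg_mul]
  exact hsub x

end FiniteDimensional

lemma eLaplacian_eq_laplacian {n : ℕ} {u : EuclideanSpace ℝ (Fin n) → ℝ} (hu : ContDiff ℝ 2 u)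
    (x : EuclideanSpace ℝ (Fin n)) : eLaplacian n u x = Δ u x := by
  simp [eLaplacian, laplacian_eq_sum_fderiv_fderiv (EuclideanSpace.basisFun (Fin n) ℝ),
    (hasFDerivAt_fderiv_apply hu.contDiffAt _).fderiv]

/-- An `f`-harmonic function on the Gaussian space (`Δu - ½⟨x,∇u⟩ = 0`) with
`u = O(e^{α|x|²/4})` as `x → ∞` for some `0 < α < 1` is constant. -/
theorem stmt_8 (n : ℕ) (u : EuclideanSpace ℝ (Fin n) → ℝ) (hsm : ContDiff ℝ (⊤ : ℕ∞) u)
    (hharm : ∀ x, eLaplacian n u x - (1 / 2) * fderiv ℝ u x x = 0)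
    (α : ℝ) (hα : α ∈ Set.Ioo (0 : ℝ) 1)
    (hO : ∃ C : ℝ, ∀ᶠ x in Filter.cocompact (EuclideanSpace ℝ (Fin n)),
        |u x| ≤ C * Real.exp (α * ‖x‖ ^ 2 / 4)) :
    ∃ c : ℝ, u = fun _ => c := by
  obtain ⟨C, hC⟩ := hO
  have hu : ContDiff ℝ 2 u := hsm.of_le (by norm_cast)
  exact stmt_8_general hu (fun x => by rw [← eLaplacian_eq_laplacian hu, hharm x]) hα.2
    (hC.mono fun x hx => (le_abs_self _).trans hx)
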